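/- arXiv:2208.03716 — 3 statements merged into one kernel-verified Lean document; each statement's English description precedes it below -/
import Mathlib

section
/- Let k be a positive integer, f : Fin k → Fin k → Fin k a binary operation, and M : Matrix (Fin k) (Fin k × Fin k) ℝ its structure matrix, M i' (i,j) = if i' = f i j then 1 else 0. Then the following are equivalent: (A) M satisfies (i) M * D = I_k, where D : Matrix (Fin k × Fin k) (Fin k) ℝ has D (i,j) l = if i = l ∧ j = l then 1 else 0; (ii) M * W = M, where W : Matrix (Fin k × Fin k) (Fin k × Fin k) ℝ is the swap permutation matrix W (a,b) (c,d) = if a = d ∧ b = c then 1 else 0; (iii) M * (M ⊗ I_k) = (M * (I_k ⊗ M)) reindexed along the natural associativity bijection ((Fin k × Fin k) × Fin k) ≃ (Fin k × (Fin k × Fin k)), where (M ⊗ I_k) (a,b) ((i,j),l) = M a (i,j) * (if b = l then 1 else 0) and (I_k ⊗ M) (a,b) (i,(j,l)) = (if a = i then 1 else 0) * M b (j,l); (iv) there exists i : Fin k such that M j' (i,j) = if j' = j then 1 else 0 for all j, j'. (B) f satisfies: f x x = x for all x; f x y = f y x for all x, y; f (f x y) z = f x (f y z) for all x, y, z; and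 there exists z : Fin k with f w z = w for all w. Condition (B) says (Fin k, f) is a lattice (with f as the join operation). -/
/-!
Sending a function `g : o → n` to the matrix with columns `e_{g j}` is functorial, faithful, and
turns `Prod.map` into the Kronecker product. All the matrices in (i)–(iii) arise in this way: `M`
from `f`, `D` from the diagonal, `W` from the swap, `M ⊗ I` and `I ⊗ M` from `f × id` and
`id × f`. So (i)–(iii) are the diagrams of functions expressing that `f` is idempotent,
commutative and associative. Condition (iv) says that `f` has a left identity, which by
commutativity is the same as a right identity.
-/

open Matrix Function
open scoped Kronecker

/-- The matrix of the linear map `R^o → R^n` with `e_j ↦ e_{g j}`. Encoding it as a submatrix of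
the identity makes Mathlib's lemmas on `Matrix.submatrix` available. -/
def functionMatrix (R : Type*) {n o : Type*} [DecidableEq n] [Zero R] [One R] (g : o → n) :
    Matrix n o R :=
  (1 : Matrix n n R).submatrix id g

/-- The structure matrix of a binary operation `f`, with columns `e_{f i j}`, through which
the laws of `f` are expressed as matrix identities. -/
def structureMatrix (R : Type*) {n : Type*} [DecidableEq n] [Zero R] [One R] (f : n → n → n) :
    Matrix n (n × n) R :=
  functionMatrix R (uncurry f)

section FunctionMatrix

variable {R m n o p : Type*} [DecidableEq m] [DecidableEq n]

theorem functionMatrix_apply [Zero R] [One R] (g : o → n) (i : n) (j : o) :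
    functionMatrix R g i j = if i = g j then 1 else 0 :=
  rfl

theorem functionMatrix_id [Zero R] [One R] : functionMatrix R (id : n → n) = 1 :=
  submatrix_id_id 1

theorem functionMatrix_submatrix_id [Zero R] [One R] (g : o → n) (h : p → o) :
    (functionMatrix R g).submatrix id h = functionMatrix R (g ∘ h) :=
  rfl

theorem functionMatrix_injective [Zero R] [One R] [NeZero (1 : R)] :
    Injective (functionMatrix R : (o → n) → Matrix n o R) := by
  intro g h hgh
  ext j
  by_contra hne
  simpa [functionMatrix_apply, hne] using congrFun₂ hgh (g j) j

theorem functionMatrix_mul_functionMatrix [NonAssocSemiring R] [Fintype n]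
    (g : n → m) (h : o → n) :
    functionMatrix R g * functionMatrix R h = functionMatrix R (g ∘ h) :=
  mul_submatrix_one (Equiv.refl n) h (functionMatrix R g)

theorem functionMatrix_kronecker_functionMatrix [MulZeroOneClass R] (g : o → m) (h : p → n) :
    functionMatrix R g ⊗ₖ functionMatrix R h = functionMatrix R (Prod.map g h) := by
  rw [functionMatrix, functionMatrix, kroneckerMap_submatrix_submatrix, one_kronecker_one,
    Prod.map_id, functionMatrix]

theorem functionMatrix_diag [Zero R] [One R] :
    functionMatrix R (fun l : n => (l, l)) = of fun q l => if q.1 = l ∧ q.2 = l then 1 else 0 := by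
  ext q l
  simp [functionMatrix_apply, Prod.ext_iff]

theorem functionMatrix_swap [Zero R] [One R] :
    functionMatrix R (Prod.swap : m × n → n × m) =
      of fun q r => if q.1 = r.2 ∧ q.2 = r.1 then 1 else 0 := by
  ext q r
  simp [functionMatrix_apply, Prod.ext_iff]

end FunctionMatrix

section StructureMatrix

variable {R n : Type*} [DecidableEq n] [NonAssocSemiring R] (f : n → n → n)

theorem structureMatrix_mul_kronecker_one [Fintype n] :
    structureMatrix R f * (structureMatrix R f ⊗ₖ (1 : Matrix n n R)) =
      functionMatrix R fun q => f (f q.1.1 q.1.2) q.2 := by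
  rw [structureMatrix, ← functionMatrix_id, functionMatrix_kronecker_functionMatrix,
    functionMatrix_mul_functionMatrix]
  rfl

theorem structureMatrix_mul_one_kronecker [Fintype n] :
    structureMatrix R f * ((1 : Matrix n n R) ⊗ₖ structureMatrix R f) =
      functionMatrix R fun q => f q.1 (f q.2.1 q.2.2) := by
  rw [structureMatrix, ← functionMatrix_id, functionMatrix_kronecker_functionMatrix,
    functionMatrix_mul_functionMatrix]
  rfl

variable [Nontrivial R]

theorem structureMatrix_mul_diag_eq_one_iff [Fintype n] :
    structureMatrix R f * functionMatrix R (fun l : n => (l, l)) = 1 ↔ ∀ x, f x x = x := by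
  rw [structureMatrix, functionMatrix_mul_functionMatrix, ← functionMatrix_id,
    functionMatrix_injective.eq_iff, funext_iff]
  rfl

theorem structureMatrix_mul_swap_eq_self_iff [Fintype n] :
    structureMatrix R f * functionMatrix R (Prod.swap : n × n → n × n) = structureMatrix R f ↔
      ∀ x y, f x y = f y x := by
  rw [structureMatrix, functionMatrix_mul_functionMatrix, functionMatrix_injective.eq_iff,
    funext_iff, Prod.forall, forall_comm]
  rfl

theorem structureMatrix_mul_kronecker_one_eq_iff [Fintype n] :
    structureMatrix R f * (structureMatrix R f ⊗ₖ (1 : Matrix n n R)) =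
        (structureMatrix R f * ((1 : Matrix n n R) ⊗ₖ structureMatrix R f)).submatrix id
          (Equiv.prodAssoc n n n) ↔
      ∀ x y z, f (f x y) z = f x (f y z) := by
  rw [structureMatrix_mul_kronecker_one, structureMatrix_mul_one_kronecker,
    functionMatrix_submatrix_id, functionMatrix_injective.eq_iff]
  simp only [funext_iff, Prod.forall, Function.comp_apply, Equiv.prodAssoc_apply]

theorem structureMatrix_submatrix_mk_eq_one_iff (i : n) :
    (structureMatrix R f).submatrix id (Prod.mk i) = 1 ↔ ∀ j, f i j = j := by
  rw [structureMatrix, functionMatrix_submatrix_id, ← functionMatrix_id,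
    functionMatrix_injective.eq_iff, funext_iff]
  rfl

end StructureMatrix

theorem stmt4_general {R n : Type*} [NonAssocSemiring R] [Nontrivial R] [Fintype n]
    [DecidableEq n] (f : n → n → n) (M : Matrix n (n × n) R)
    (hM : ∀ i' p, M i' p = if i' = f p.1 p.2 then 1 else 0) :
    (M * (of fun (p : n × n) (l : n) => if p.1 = l ∧ p.2 = l then (1 : R) else 0) = 1 ∧
      M * (of fun p q : n × n => if p.1 = q.2 ∧ p.2 = q.1 then (1 : R) else 0) = M ∧
      (∀ a i j l, (M * (M ⊗ₖ (1 : Matrix n n R))) a ((i, j), l) =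
        (M * ((1 : Matrix n n R) ⊗ₖ M)) a (i, (j, l))) ∧
      ∃ i, ∀ j j', M j' (i, j) = if j' = j then 1 else 0) ↔
    (∀ x, f x x = x) ∧ (∀ x y, f x y = f y x) ∧ (∀ x y z, f (f x y) z = f x (f y z)) ∧
      ∃ z, ∀ w, f w z = w := by
  obtain rfl : M = structureMatrix R f := Matrix.ext hM
  have entrywise_iff (A : Matrix n ((n × n) × n) R) (B : Matrix n (n × n × n) R) :
      (∀ a i j l, A a ((i, j), l) = B a (i, (j, l))) ↔
        A = B.submatrix id (Equiv.prodAssoc n n n) := by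
    simp only [← Matrix.ext_iff, Prod.forall, submatrix_apply, id, Equiv.prodAssoc_apply]
  have column_iff (i : n) :
      (∀ j j', structureMatrix R f j' (i, j) = if j' = j then 1 else 0) ↔
        (structureMatrix R f).submatrix id (Prod.mk i) = 1 := by
    rw [forall_comm, ← Matrix.ext_iff]
    rfl
  rw [← functionMatrix_diag, ← functionMatrix_swap, entrywise_iff,
    structureMatrix_mul_diag_eq_one_iff, structureMatrix_mul_swap_eq_self_iff,
    structureMatrix_mul_kronecker_one_eq_iff]
  simp only [column_iff, structureMatrix_submatrix_mk_eq_one_iff]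
  refine and_congr_right fun _ => and_congr_right fun comm => and_congr_right fun _ => ?_
  exact exists_congr fun z => forall_congr' fun w => by rw [comm z w]

/-- Matrix criteria for a finite set with a binary operator to be a lattice: conditions
(i)–(iv) on the structure matrix `M` of `f` hold if and only if `f` is idempotent,
commutative, associative, and has an identity element. -/
theorem stmt4 (k : ℕ) (hk : 0 < k) (f : Fin k → Fin k → Fin k)
    (M : Matrix (Fin k) (Fin k × Fin k) ℝ)
    (hM : ∀ (i' : Fin k) (p : Fin k × Fin k),
      M i' p = if i' = f p.1 p.2 then (1 : ℝ) else 0) :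
    ((M * (Matrix.of fun (p : Fin k × Fin k) (l : Fin k) =>
          if p.1 = l ∧ p.2 = l then (1 : ℝ) else 0) = (1 : Matrix (Fin k) (Fin k) ℝ)) ∧
     (M * (Matrix.of fun (p q : Fin k × Fin k) =>
          if p.1 = q.2 ∧ p.2 = q.1 then (1 : ℝ) else 0) = M) ∧
     (∀ (a i j l : Fin k),
        (M * (Matrix.of fun (ab : Fin k × Fin k) (q : (Fin k × Fin k) × Fin k) =>
            M ab.1 q.1 * (if ab.2 = q.2 then (1 : ℝ) else 0))) a ((i, j), l)
        = (M * (Matrix.of fun (ab : Fin k × Fin k) (q : Fin k × (Fin k × Fin k)) =>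
            (if ab.1 = q.1 then (1 : ℝ) else 0) * M ab.2 q.2)) a (i, (j, l))) ∧
     (∃ i : Fin k, ∀ j j' : Fin k,
        M j' (i, j) = if j' = j then (1 : ℝ) else 0))
    ↔
    ((∀ x, f x x = x) ∧ (∀ x y, f x y = f y x) ∧
     (∀ x y z, f (f x y) z = f x (f y z)) ∧
     (∃ z : Fin k, ∀ w, f w z = w)) :=
  stmt4_general f M hM
end

section
/- Let n be a positive integer and f : (Fin n → Bool) → Bool, where Bool carries its standard lattice structure (false < true, ⊔ = or, ⊓ = and) and (Fin n → Bool) → Bool carries the pointwise lattice structure. Let P be the set of coordinate projections P = {g | ∃ i : Fin n, g = fun x => x i}. Then f belongs to the lattice closure of P (Mathlib's latticeClosure P) if and only if f is monotone, f (fun _ => false) = false, and f (fun _ => true) = true. That is, the class of n-ary Boolean functions generated by disjunction and conjunction (without constants) is exactly the class of monotonic and reproducing Boolean functions. -/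
/-!
If a function `f` on a finite nonempty set admits, for any two points `x` and `y`, a member `g x y`
of a sublattice lying above `f` at `x` and below `f` at `y`, then `f = ⨆ x, ⨅ y, g x y` belongs to
that sublattice; this is the finite form of the argument behind the lattice version of the
Stone–Weierstrass theorem. Over a linear order the functions interpolated in this way by a given
set themselves form a sublattice, so two-point interpolation by generators characterizes
`latticeClosure`. For a Boolean function and the projections, interpolating at `x` and `y` fails
exactly when `f x = true`, `f y = false` and `x ≤ y`, or `f x = true` and `x` is constantly false,
or `f y = false` and `y` is constantly true.
-/

section TwoPointInterpolation

variable {X L : Type*} {S : Set (X → L)} {f : X → L}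

lemma mem_of_isSublattice_of_forall_exists_le_and_le [Finite X] [Nonempty X] [Lattice L]
    (hS : IsSublattice S) (hf : ∀ x y, ∃ g ∈ S, f x ≤ g x ∧ g y ≤ f y) : f ∈ S := by
  have := Fintype.ofFinite X
  choose g hgS hfg hgf using hf
  have hne : (Finset.univ : Finset X).Nonempty := Finset.univ_nonempty
  suffices f = Finset.univ.sup' hne fun x ↦ Finset.univ.inf' hne (g x) by
    rw [this]
    exact hS.supClosed.finsetSup'_mem hne fun x _ ↦
      hS.infClosed.finsetInf'_mem hne fun y _ ↦ hgS x y
  refine le_antisymm (fun x ↦ ?_) (Finset.sup'_le _ _ fun x _ y ↦ ?_)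
  · have hx : f x ≤ Finset.univ.inf' hne (g x) x := by
      rw [Finset.inf'_apply]
      exact Finset.le_inf' _ _ fun y _ ↦ hfg x y
    exact hx.trans (Finset.le_sup' (fun x ↦ Finset.univ.inf' hne (g x)) (Finset.mem_univ x) x)
  · exact (Finset.inf'_le (g x) (Finset.mem_univ y) y).trans (hgf x y)

lemma exists_le_and_le_of_mem_latticeClosure [LinearOrder L] (hf : f ∈ latticeClosure S)
    (x y : X) : ∃ g ∈ S, f x ≤ g x ∧ g y ≤ f y := by
  induction hf using latticeClosure_sup_inf_induction with
  | mem g hg => exact ⟨g, hg, le_rfl, le_rfl⟩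
  | sup a _ b _ ha hb =>
    obtain ⟨g, hg, hag, hga⟩ := ha
    obtain ⟨h, hh, hbh, hhb⟩ := hb
    rcases le_total (a x) (b x) with hab | hba
    · exact ⟨h, hh, sup_le (hab.trans hbh) hbh, le_sup_of_le_right hhb⟩
    · exact ⟨g, hg, sup_le hag (hba.trans hag), le_sup_of_le_left hga⟩
  | inf a _ b _ ha hb =>
    obtain ⟨g, hg, hag, hga⟩ := ha
    obtain ⟨h, hh, hbh, hhb⟩ := hb
    rcases le_total (a y) (b y) with hab | hba
    · exact ⟨g, hg, inf_le_of_left_le hag, le_inf hga (hga.trans hab)⟩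
    · exact ⟨h, hh, inf_le_of_right_le hbh, le_inf (hhb.trans hba) hhb⟩

theorem mem_latticeClosure_iff_forall_exists_le_and_le [Finite X] [Nonempty X] [LinearOrder L] :
    f ∈ latticeClosure S ↔ ∀ x y, ∃ g ∈ S, f x ≤ g x ∧ g y ≤ f y := by
  refine ⟨exists_le_and_le_of_mem_latticeClosure, fun hf ↦ ?_⟩
  refine mem_of_isSublattice_of_forall_exists_le_and_le isSublattice_latticeClosure fun x y ↦ ?_
  obtain ⟨g, hg, hfg⟩ := hf x y
  exact ⟨g, subset_latticeClosure hg, hfg⟩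

end TwoPointInterpolation

section BooleanFunctions

lemma monotone_of_forall_exists_le_apply_and_apply_le {ι L : Type*} [Preorder L]
    {f : (ι → L) → L} (hf : ∀ x y, ∃ i, f x ≤ x i ∧ y i ≤ f y) : Monotone f := by
  intro x y hxy
  obtain ⟨i, hx, hy⟩ := hf x y
  exact hx.trans ((hxy i).trans hy)

variable {ι : Type*} {f : (ι → Bool) → Bool}

lemma exists_le_apply_and_apply_le_of_monotone (hf : Monotone f)
    (hfalse : f (fun _ ↦ false) = false) (htrue : f (fun _ ↦ true) = true) (x y : ι → Bool) :
    ∃ i, f x ≤ x i ∧ y i ≤ f y := by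
  have exists_eq_true {z : ι → Bool} (hz : f z = true) : ∃ i, z i = true := by
    have hne : z ≠ fun _ ↦ false := by
      rintro rfl
      exact Bool.false_ne_true (hfalse.symm.trans hz)
    simpa using Function.ne_iff.mp hne
  have exists_eq_false {z : ι → Bool} (hz : f z = false) : ∃ i, z i = false := by
    have hne : z ≠ fun _ ↦ true := by
      rintro rfl
      exact Bool.false_ne_true (hz.symm.trans htrue)
    simpa using Function.ne_iff.mp hne
  cases hx : f x <;> cases hy : f y
  · obtain ⟨i, hi⟩ := exists_eq_false hy
    exact ⟨i, Bool.false_le _, hi.le⟩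
  · obtain ⟨i, -⟩ := exists_eq_true hy
    exact ⟨i, Bool.false_le _, Bool.le_true _⟩
  · have hxy : ¬ x ≤ y := fun h ↦
      Bool.false_ne_true (hy.symm.trans (top_le_iff.mp (hx.ge.trans (hf h))))
    obtain ⟨i, hi⟩ := not_forall.mp hxy
    obtain ⟨hyi, hxi⟩ := Bool.lt_iff.mp (not_le.mp hi)
    exact ⟨i, hxi.ge, hyi.le⟩
  · obtain ⟨i, hi⟩ := exists_eq_true hx
    exact ⟨i, hi.ge, Bool.le_true _⟩

lemma forall_exists_le_apply_and_apply_le_iff :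
    (∀ x y, ∃ i, f x ≤ x i ∧ y i ≤ f y) ↔
      Monotone f ∧ f (fun _ ↦ false) = false ∧ f (fun _ ↦ true) = true := by
  refine ⟨fun hf ↦ ⟨monotone_of_forall_exists_le_apply_and_apply_le hf, ?_, ?_⟩,
    fun ⟨hf, hfalse, htrue⟩ ↦ exists_le_apply_and_apply_le_of_monotone hf hfalse htrue⟩
  · obtain ⟨_, hle, -⟩ := hf (fun _ ↦ false) (fun _ ↦ false)
    exact le_bot_iff.mp hle
  · obtain ⟨_, -, hle⟩ := hf (fun _ ↦ true) (fun _ ↦ true)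
    exact top_le_iff.mp hle

theorem stmt15_general [Finite ι] :
    f ∈ latticeClosure {g : (ι → Bool) → Bool | ∃ i, g = fun x ↦ x i} ↔
      Monotone f ∧ f (fun _ ↦ false) = false ∧ f (fun _ ↦ true) = true := by
  rw [mem_latticeClosure_iff_forall_exists_le_and_le, ← forall_exists_le_apply_and_apply_le_iff]
  simp

end BooleanFunctions

/-- Post's characterization: an `n`-ary Boolean function is generated by `∨` and `∧`
(applied to the variables) if and only if it is monotone and reproducing. -/
theorem stmt15 (n : ℕ) (hn : 0 < n) (f : (Fin n → Bool) → Bool) :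
    f ∈ latticeClosure
      {g : (Fin n → Bool) → Bool | ∃ i : Fin n, g = fun x => x i}
    ↔ (Monotone f ∧ f (fun _ => false) = false ∧ f (fun _ => true) = true) :=
  stmt15_general
end

section
/- Let L be a finite bounded lattice, i.e., a type with instances [Lattice L], [BoundedOrder L], [Fintype L], [DecidableEq L], let n be a positive integer, and let f : (Fin n → L) → L be monotone (with respect to the pointwise order on Fin n → L). For a, b : L define m_{a,b} : L → L by m_{a,b}(x) = b if a ≤ x and m_{a,b}(x) = ⊥ otherwise. Then for every x : Fin n → L, f x = Finset.univ.sup (fun a : Fin n → L => Finset.univ.inf' (Finset.univ_nonempty) (fun i : Fin n => if a i ≤ x i then f a else ⊥)); that is, f(x) = ⋁_{a ∈ L^n} ⋀_{i=1}^{n} m_{a_i, f(a)}(x_i), where the supremum ranges over all n-tuples a and the infimum over all coordinates i. -/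
open Classical

/-- The map `m_{a,b}`, equal to `b` on the principal filter of `a` and to `⊥` elsewhere. The
domain may differ from the codomain, so that `a` can be a whole tuple as well as one of its
coordinates. -/
noncomputable def thresholdMap {α β : Type*} [LE α] [Bot β] (a : α) (b : β) (x : α) : β :=
  if a ≤ x then b else ⊥

section thresholdMap

variable {α β : Type*}

theorem thresholdMap_of_le [LE α] [Bot β] {a x : α} (h : a ≤ x) (b : β) :
    thresholdMap a b x = b :=
  if_pos h

theorem thresholdMap_of_not_le [LE α] [Bot β] {a x : α} (h : ¬a ≤ x) (b : β) :
    thresholdMap a b x = ⊥ :=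
  if_neg h

theorem thresholdMap_le_iff [LE α] [LE β] [OrderBot β] {a x : α} {b c : β} :
    thresholdMap a b x ≤ c ↔ a ≤ x → b ≤ c := by
  by_cases h : a ≤ x
  · simp [thresholdMap_of_le, h]
  · simp [thresholdMap_of_not_le, h]

theorem isGreatest_range_thresholdMap [Preorder α] [Preorder β] [OrderBot β] {f : α → β}
    (hf : Monotone f) (x : α) :
    IsGreatest (Set.range fun a ↦ thresholdMap a (f a) x) (f x) :=
  ⟨⟨x, thresholdMap_of_le le_rfl (f x)⟩,
    Set.forall_mem_range.2 fun _ ↦ thresholdMap_le_iff.2 fun h ↦ hf h⟩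

theorem isGLB_range_thresholdMap_apply {ι : Type*} [Nonempty ι] {π : ι → Type*} [∀ i, LE (π i)]
    [Preorder β] [OrderBot β] (a : ∀ i, π i) (b : β) (x : ∀ i, π i) :
    IsGLB (Set.range fun i ↦ thresholdMap (a i) b (x i)) (thresholdMap a b x) := by
  by_cases h : a ≤ x
  · have eq_const : (fun i ↦ thresholdMap (a i) b (x i)) = fun _ ↦ b :=
      funext fun i ↦ thresholdMap_of_le (h i) b
    rw [thresholdMap_of_le h, eq_const, Set.range_const]
    exact isGLB_singleton
  · obtain ⟨i, hi⟩ : ∃ i, ¬a i ≤ x i := not_forall.1 h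
    rw [thresholdMap_of_not_le h]
    exact IsLeast.isGLB ⟨⟨i, thresholdMap_of_not_le hi b⟩, fun _ _ ↦ bot_le⟩

end thresholdMap

section Finset

variable {ι β : Type*} [Fintype ι]

theorem isLUB_range_univ_sup [SemilatticeSup β] [OrderBot β] (f : ι → β) :
    IsLUB (Set.range f) (Finset.univ.sup f) := by
  simpa only [Finset.coe_univ, Set.image_univ] using Finset.isLUB_sup (s := Finset.univ) (f := f)

theorem isGLB_range_univ_inf' [SemilatticeInf β] (h : (Finset.univ : Finset ι).Nonempty)
    (f : ι → β) : IsGLB (Set.range f) (Finset.univ.inf' h f) :=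
  ⟨Set.forall_mem_range.2 fun i ↦ Finset.inf'_le f (Finset.mem_univ i),
    fun _ hb ↦ Finset.le_inf' h f fun i _ ↦ hb (Set.mem_range_self i)⟩

end Finset

theorem stmt16_general {ι β : Type*} [Nonempty ι] {π : ι → Type*} [∀ i, Preorder (π i)]
    [PartialOrder β] [OrderBot β] {f : (∀ i, π i) → β} (hf : Monotone f) (x : ∀ i, π i)
    {g : (∀ i, π i) → β}
    (hg : ∀ a, IsGLB (Set.range fun i ↦ thresholdMap (a i) (f a) (x i)) (g a)) :
    IsGreatest (Set.range g) (f x) := by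
  have g_eq : g = fun a ↦ thresholdMap a (f a) x :=
    funext fun a ↦ (hg a).unique (isGLB_range_thresholdMap_apply a (f a) x)
  exact g_eq ▸ isGreatest_range_thresholdMap hf x

/-- Canonical representation of a monotone function over a finite bounded lattice by the
basic operators: `f(x) = ⋁_{a ∈ Lⁿ} ⋀_i m_{aᵢ, f(a)}(xᵢ)`. -/
theorem stmt16 (L : Type*) [Lattice L] [BoundedOrder L] [Fintype L] [DecidableEq L]
    (n : ℕ) (hn : 0 < n) (f : (Fin n → L) → L) (hf : Monotone f) :
    ∀ x : Fin n → L,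
      f x = Finset.univ.sup (fun a : Fin n → L =>
        Finset.univ.inf' ⟨(⟨0, hn⟩ : Fin n), Finset.mem_univ _⟩
          (fun i : Fin n => if a i ≤ x i then f a else ⊥)) := by
  intro x
  have : Nonempty (Fin n) := ⟨⟨0, hn⟩⟩
  exact (stmt16_general hf x fun _ ↦ isGLB_range_univ_inf' _ _).isLUB.unique
    (isLUB_range_univ_sup _)
end
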